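/- arXiv:2411.17572 — 2 statements merged into one kernel-verified Lean document; each statement's English description precedes it below -/
import Mathlib

section
/- Let k be an algebraically closed field, R = k[x_1,…,x_n] a positively ℕ^p-graded polynomial ring, and φ: R → S the standardization homomorphism into the standard ℕ^p-graded polynomial ring S = k[y_{i,j}]. For any homogeneous ideal I ⊆ R, the codimension (height) of I in R equals the codimension (height) of its standardization J = φ(I)S in S. -/
open MvPolynomial

/-- The standardization homomorphism `φ : k[x₁,…,x_n] → k[y_{i,j}]`, `xᵢ ↦ yᵢ,₁⋯yᵢ,ℓᵢ`. -/
noncomputable def standardization {n : ℕ} (k : Type*) [CommSemiring k] (ℓ : Fin n → ℕ) :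
    MvPolynomial (Fin n) k →ₐ[k] MvPolynomial (Σ i : Fin n, Fin (ℓ i)) k :=
  MvPolynomial.aeval fun i => ∏ j : Fin (ℓ i), MvPolynomial.X ⟨i, j⟩

/-- The codimension (height) of an ideal: the infimum of the heights of the primes
containing it. -/
noncomputable def idealCodim {R : Type*} [CommRing R] (I : Ideal R) : ℕ∞ :=
  ⨅ (P : PrimeSpectrum R) (_ : I ≤ P.asIdeal), Order.height P

namespace StdAux

/-- The exponent map. -/
noncomputable def iota {n : ℕ} (ℓ : Fin n → ℕ) (a : Fin n →₀ ℕ) :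
    (Σ i : Fin n, Fin (ℓ i)) →₀ ℕ :=
  Finsupp.equivFunOnFinite.symm fun s => a s.1

theorem iota_apply {n : ℕ} (ℓ : Fin n → ℕ) (a : Fin n →₀ ℕ) (s) : iota ℓ a s = a s.1 := rfl

theorem std_monomial {n : ℕ} (k : Type*) [Field k] (ℓ : Fin n → ℕ) (a : Fin n →₀ ℕ) :
    standardization k ℓ (monomial a 1) = monomial (iota ℓ a) 1 := by
  rw [standardization, aeval_monomial, map_one, one_mul, Finsupp.prod_fintype _ _ (by simp),
    monomial_eq, C_1, one_mul, Finsupp.prod_fintype _ _ (by simp), Fintype.prod_sigma]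
  refine Finset.prod_congr rfl fun i _ => ?_
  rw [← Finset.prod_pow]
  rfl

/-- Exponents of the free basis. -/
abbrev B {n : ℕ} (ℓ : Fin n → ℕ) :=
  {m : (Σ i : Fin n, Fin (ℓ i)) →₀ ℕ // ∀ i, ∃ j, m ⟨i, j⟩ = 0}

theorem bij {n : ℕ} (ℓ : Fin n → ℕ) (h : ∀ i, 0 < ℓ i) :
    Function.Bijective
      (fun s : (Σ _ : B ℓ, (Fin n →₀ ℕ)) => iota ℓ s.2 + s.1.1) := by
  constructor
  · rintro ⟨⟨b, hb⟩, a⟩ ⟨⟨b', hb'⟩, a'⟩ e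
    have e' : ∀ i j, a i + b ⟨i, j⟩ = a' i + b' ⟨i, j⟩ := fun i j => DFunLike.congr_fun e ⟨i, j⟩
    have ha : a = a' := by
      ext i
      obtain ⟨j, hj⟩ := hb i
      obtain ⟨j', hj'⟩ := hb' i
      have := e' i j
      have := e' i j'
      omega
    subst ha
    have : b = b' := by
      ext ⟨i, j⟩
      have := e' i j
      omega
    subst this
    rfl
  · intro m
    have hex : ∀ i, ∃ j : Fin (ℓ i), ∀ j', m ⟨i, j⟩ ≤ m ⟨i, j'⟩ := fun i => by
      haveI : Nonempty (Fin (ℓ i)) := ⟨⟨0, h i⟩⟩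
      exact Finite.exists_min fun j => m ⟨i, j⟩
    choose j hj using hex
    refine ⟨⟨⟨Finsupp.equivFunOnFinite.symm fun s => m s - m ⟨s.1, j s.1⟩, fun i => ⟨j i, ?_⟩⟩,
      Finsupp.equivFunOnFinite.symm fun i => m ⟨i, j i⟩⟩, ?_⟩
    · simp
    · ext ⟨i, j'⟩
      have := hj i j'
      simp [iota_apply]
      omega

theorem flat {n : ℕ} (k : Type*) [Field k] (ℓ : Fin n → ℕ) (h : ∀ i, 0 < ℓ i) :
    (standardization k ℓ).toRingHom.Flat := by
  letI : Algebra (MvPolynomial (Fin n) k) (MvPolynomial (Σ i : Fin n, Fin (ℓ i)) k) :=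
    (standardization k ℓ).toRingHom.toAlgebra
  have hsm : ∀ (r : MvPolynomial (Fin n) k) (s : MvPolynomial (Σ i : Fin n, Fin (ℓ i)) k),
    r • s = standardization k ℓ r * s := fun _ _ => rfl
  haveI : IsScalarTower k (MvPolynomial (Fin n) k) (MvPolynomial (Σ i : Fin n, Fin (ℓ i)) k) :=
    IsScalarTower.of_algebraMap_eq fun r => ((standardization k ℓ).commutes r).symm
  let L : (B ℓ →₀ MvPolynomial (Fin n) k) →ₗ[MvPolynomial (Fin n) k]
      MvPolynomial (Σ i : Fin n, Fin (ℓ i)) k :=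
    Finsupp.linearCombination _ (fun b : B ℓ => monomial b.1 (1 : k))
  let b1 := Finsupp.basis (fun _ : B ℓ => basisMonomials (Fin n) k)
  let b2 := basisMonomials (Σ i : Fin n, Fin (ℓ i)) k
  let E := b1.equiv b2 (Equiv.ofBijective _ (bij ℓ h))
  have hE : L.restrictScalars k = E.toLinearMap := by
    refine b1.ext fun s => ?_
    have h2 : E.toLinearMap (b1 s) = monomial (iota ℓ s.2 + s.1.1) (1 : k) := by
      change E (b1 s) = _
      rw [Module.Basis.equiv_apply]
      simp [b2]
    rw [h2]
    simp [b1, L, hsm, std_monomial, monomial_mul]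
  have hL : Function.Bijective L := by
    have : (L : _ → _) = E := by
      ext1 x
      exact LinearMap.congr_fun hE x
    rw [this]
    exact E.bijective
  exact Module.Flat.of_linearEquiv (LinearEquiv.ofBijective L hL).symm

/-- Retraction. -/
noncomputable def retr {n : ℕ} (k : Type*) [Field k] (ℓ : Fin n → ℕ) :
    MvPolynomial (Σ i : Fin n, Fin (ℓ i)) k →ₐ[k] MvPolynomial (Fin n) k :=
  aeval fun s => if s.2.1 = 0 then X s.1 else 1

theorem retr_std {n : ℕ} (k : Type*) [Field k] (ℓ : Fin n → ℕ) (h : ∀ i, 0 < ℓ i) (f) :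
    retr k ℓ (standardization k ℓ f) = f := by
  have : (retr k ℓ).comp (standardization k ℓ) = AlgHom.id k _ := by
    ext1 i
    simp only [retr, standardization, AlgHom.comp_apply, aeval_X, map_prod, AlgHom.id_apply]
    rw [Finset.prod_eq_single (⟨0, h i⟩ : Fin (ℓ i))]
    · simp
    · intro j _ hj
      rw [if_neg]
      intro h0
      exact hj (Fin.ext h0)
    · simp
  exact AlgHom.congr_fun this f

theorem height_fiber {R S : Type*} [CommRing R] [CommRing S] [Algebra R S] [IsNoetherianRing R]
    [IsNoetherianRing S] (p : Ideal R) [p.IsPrime] (P : Ideal S)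
    (hP : P ∈ (p.map (algebraMap R S)).minimalPrimes) [P.LiesOver p] : P.height ≤ p.height := by
  haveI := hP.1.1
  refine (Ideal.height_le_height_add_of_liesOver p P).trans ?_
  haveI hpr : (P.map (Ideal.Quotient.mk <| p.map (algebraMap R S))).IsPrime :=
    Ideal.map_isPrime_of_surjective Ideal.Quotient.mk_surjective (by simpa using hP.1.2)
  suffices h0 : (P.map (Ideal.Quotient.mk <| p.map (algebraMap R S))).height = 0 by
    rw [h0, add_zero]
  rw [Ideal.height_eq_zero_iff]
  refine ⟨⟨hpr, bot_le⟩, fun Q hQ hle => ?_⟩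
  rw [Ideal.map_le_iff_le_comap]
  haveI := hQ.1
  refine hP.2 ⟨inferInstance, ?_⟩ ?_
  · intro x hx
    rw [Ideal.mem_comap, Ideal.Quotient.eq_zero_iff_mem.2 hx]
    exact Q.zero_mem
  · refine (Ideal.comap_mono hle).trans ?_
    rw [Ideal.comap_map_of_surjective _ Ideal.Quotient.mk_surjective]
    refine sup_le le_rfl ?_
    simpa [← RingHom.ker_eq_comap_bot] using hP.1.2

theorem height_ge {R S : Type*} [CommRing R] [CommRing S] [Algebra R S] [IsNoetherianRing R]
    [IsNoetherianRing S] [Algebra.HasGoingDown R S] (P : Ideal S) [P.IsPrime] :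
    (P.comap (algebraMap R S)).height ≤ P.height := by
  haveI : P.LiesOver (P.comap (algebraMap R S)) := ⟨rfl⟩
  rw [Ideal.height_eq_height_add_of_liesOver_of_hasGoingDown (P.comap (algebraMap R S)) P]
  exact le_self_add

end StdAux

/-- Let `R = k[x₁,…,x_n]` be positively `ℕ^p`-graded (`deg xᵢ = D i ≠ 0`) over an algebraically
closed field `k`, and let `S = k[y_{i,j} : 1 ≤ j ≤ ℓᵢ]` (with `ℓᵢ = |D i|`) be standard
`ℕ^p`-graded, each `y_{i,j}` having degree a standard basis vector, so that
`deg xᵢ = Σⱼ deg y_{i,j}`. For any homogeneous ideal `I ⊆ R`, the codimension of `I` in `R`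
equals the codimension of its standardization `J = φ(I)S` in `S`. -/
theorem standardization_codim {p n : ℕ} (k : Type*) [Field k] [IsAlgClosed k]
    (D : Fin n → Fin p → ℕ) (hD : ∀ i, D i ≠ 0)
    (ℓ : Fin n → ℕ) (hℓ : ∀ i, ℓ i = ∑ c, D i c)
    (degY : (Σ i : Fin n, Fin (ℓ i)) → Fin p)
    (hdegY : ∀ (i : Fin n) (c : Fin p),
      (Finset.univ.filter fun j : Fin (ℓ i) => degY ⟨i, j⟩ = c).card = D i c)
    (I : Ideal (MvPolynomial (Fin n) k))
    (hI : ∀ f ∈ I, ∀ e : Fin p → ℕ, MvPolynomial.weightedHomogeneousComponent D e f ∈ I) :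
    idealCodim I = idealCodim (Ideal.map (standardization k ℓ) I) := by
  have hpos : ∀ i, 0 < ℓ i := by
    intro i
    rw [hℓ i, Nat.pos_iff_ne_zero]
    intro h0
    apply hD i
    ext c
    exact (Finset.sum_eq_zero_iff.1 h0) c (Finset.mem_univ c)
  letI alg : Algebra (MvPolynomial (Fin n) k) (MvPolynomial (Σ i : Fin n, Fin (ℓ i)) k) :=
    (standardization k ℓ).toRingHom.toAlgebra
  haveI : Module.Flat (MvPolynomial (Fin n) k) (MvPolynomial (Σ i : Fin n, Fin (ℓ i)) k) :=
    StdAux.flat k ℓ hpos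
  have hmap : Ideal.map (standardization k ℓ) I = Ideal.map (algebraMap _ _) I := rfl
  rw [hmap]
  unfold idealCodim
  refine le_antisymm ?_ ?_
  · refine le_iInf₂ fun Q hQ => ?_
    refine (iInf₂_le (PrimeSpectrum.comap (algebraMap _ _) Q) (Ideal.map_le_iff_le_comap.1 hQ)).trans ?_
    rw [← PrimeSpectrum.height_eq_orderHeight, ← PrimeSpectrum.height_eq_orderHeight]
    exact StdAux.height_ge Q.asIdeal
  · refine le_iInf₂ fun P hP => ?_
    have hcomap : (P.asIdeal.comap (StdAux.retr k ℓ)).comap (algebraMap (MvPolynomial (Fin n) k) _)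
        = P.asIdeal := by
      ext f
      simp only [Ideal.mem_comap]
      rw [show algebraMap (MvPolynomial (Fin n) k) (MvPolynomial (Σ i : Fin n, Fin (ℓ i)) k) f
        = standardization k ℓ f from rfl, StdAux.retr_std k ℓ hpos]
    obtain ⟨Q, hQ, hle⟩ := Ideal.exists_minimalPrimes_le (Ideal.map_le_iff_le_comap.2 hcomap.ge)
    haveI := hQ.1.1
    haveI : Q.LiesOver P.asIdeal :=
      ⟨le_antisymm (Ideal.map_le_iff_le_comap.1 hQ.1.2) ((Ideal.comap_mono hle).trans hcomap.le)⟩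
    refine (iInf₂_le (⟨Q, inferInstance⟩ : PrimeSpectrum _)
      ((Ideal.map_mono hP).trans hQ.1.2)).trans ?_
    rw [← PrimeSpectrum.height_eq_orderHeight, ← PrimeSpectrum.height_eq_orderHeight]
    exact StdAux.height_fiber P.asIdeal Q hQ
end

section
/- Let A be a commutative Noetherian ring whose spectrum Spec(A) is connected, S = A[x_1,…,x_n] graded with deg(x_i) = δ_i > 0, I ⊆ S a homogeneous ideal, and R = S/I. If R is flat as an A-module, then all fibers R(p) = R ⊗_A κ(p), for p ∈ Spec(A), have the same Krull dimension. -/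
open TensorProduct

/-- The residue field `κ(p) = A_p / p A_p` of `A` at a prime `p`. -/
abbrev residueFieldAt {A : Type*} [CommRing A] (p : PrimeSpectrum A) : Type _ :=
  IsLocalRing.ResidueField (Localization.AtPrime p.asIdeal)

section helpers
open MvPolynomial

lemma aux_dim_integral {R S : Type*} [CommRing R] [CommRing S] (f : R →+* S)
    (hf : Function.Injective f) (hi : f.IsIntegral) : ringKrullDim S = ringKrullDim R := by
  algebraize [f]
  have : Algebra.IsIntegral R S := ⟨hi⟩
  apply le_antisymm
  · apply Order.krullDim_le_of_strictMono (PrimeSpectrum.comap (algebraMap R S))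
    intro I J hIJ
    have := Ideal.IsIntegral.comap_lt_comap (R := R) (I := I.asIdeal) (J := J.asIdeal) hIJ
    exact this
  · refine iSup_le fun l => ?_
    obtain ⟨Q, -, hQ, hQ'⟩ := Ideal.exists_ideal_over_prime_of_isIntegral (R := R) (S := S)
      (RelSeries.head l).asIdeal ⊥ (by
        intro x hx
        have : f x = 0 := hx
        have : x = 0 := hf (by simpa using this)
        simp [this])
    have : Q.LiesOver (RelSeries.head l).asIdeal := ⟨hQ'.symm⟩
    obtain ⟨L, hL, -⟩ := Ideal.exists_ltSeries_of_hasGoingUp (S := S) l Q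
    rw [← hL]
    exact Order.LTSeries.length_le_krullDim L

/-- polys of weight ≤ e -/
noncomputable abbrev auxS {n : ℕ} (δ : Fin n → ℕ) (K : Type*) [CommRing K] (e : ℕ) :
    Submodule K (MvPolynomial (Fin n) K) :=
  restrictSupport K {d | Finsupp.weight δ d ≤ e}

lemma auxS_mono {n : ℕ} (δ : Fin n → ℕ) (K : Type*) [CommRing K] {a b : ℕ} (h : a ≤ b) :
    auxS δ K a ≤ auxS δ K b :=
  restrictSupport_mono _ fun _ hd => le_trans hd h

open scoped Pointwise in
lemma auxS_mul {n : ℕ} (δ : Fin n → ℕ) (K : Type*) [CommRing K] {a b : ℕ}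
    {p q : MvPolynomial (Fin n) K} (hp : p ∈ auxS δ K a) (hq : q ∈ auxS δ K b) :
    p * q ∈ auxS δ K (a + b) := by
  have h := Submodule.mul_mem_mul hp hq
  rw [← restrictSupport_add] at h
  refine restrictSupport_mono K ?_ h
  rintro _ ⟨x, hx, y, hy, rfl⟩
  simp only [Set.mem_ofPred_eq, map_add] at *
  omega

lemma auxS_one {n : ℕ} (δ : Fin n → ℕ) (K : Type*) [CommRing K] (e : ℕ) :
    (1 : MvPolynomial (Fin n) K) ∈ auxS δ K e := by
  have : (1 : MvPolynomial (Fin n) K) = monomial 0 1 := rfl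
  rw [this, monomial_mem_restrictSupport]
  left; simp

lemma auxS_pow {n : ℕ} (δ : Fin n → ℕ) (K : Type*) [CommRing K] {a : ℕ}
    {p : MvPolynomial (Fin n) K} (hp : p ∈ auxS δ K a) (k : ℕ) :
    p ^ k ∈ auxS δ K (k * a) := by
  induction k with
  | zero => simpa using auxS_one δ K 0
  | succ k ih => rw [pow_succ, add_mul, one_mul]; exact auxS_mul δ K ih hp

lemma auxS_prod {n : ℕ} (δ : Fin n → ℕ) (K : Type*) [CommRing K] {ι : Type*} (s : Finset ι)
    (p : ι → MvPolynomial (Fin n) K) (a : ι → ℕ) (hp : ∀ i, p i ∈ auxS δ K (a i)) :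
    ∏ i ∈ s, p i ∈ auxS δ K (∑ i ∈ s, a i) := by
  classical
  induction s using Finset.induction_on with
  | empty => simpa using auxS_one δ K 0
  | insert i s hi ih =>
    rw [Finset.prod_insert hi, Finset.sum_insert hi]; exact auxS_mul δ K (hp i) ih

lemma auxS_exists {n : ℕ} (δ : Fin n → ℕ) (K : Type*) [CommRing K]
    (p : MvPolynomial (Fin n) K) : ∃ e, p ∈ auxS δ K e := by
  refine ⟨p.support.sup (Finsupp.weight δ), ?_⟩
  rw [mem_restrictSupport_iff]
  intro d hd
  exact Finset.le_sup (f := Finsupp.weight δ) hd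

lemma auxS_finite {n : ℕ} (δ : Fin n → ℕ) (hδ : ∀ i, 0 < δ i) (K : Type*) [CommRing K] (e : ℕ) :
    Module.Finite K (auxS δ K e) := by
  have := (Finsupp.finite_of_nat_weight_le δ (fun i => (hδ i).ne') e).to_subtype
  exact Module.Finite.of_basis (basisRestrictSupport K {d | Finsupp.weight δ d ≤ e})

/-- box exponents -/
noncomputable def auxBox (d N : ℕ) : {a : Fin d →₀ ℕ | ∀ i, a i ≤ N} ≃ (Fin d → Fin (N + 1)) where
  toFun a i := ⟨a.1 i, Nat.lt_succ_of_le (a.2 i)⟩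
  invFun b := ⟨Finsupp.equivFunOnFinite.symm fun i => (b i : ℕ), fun i => by
    simpa using Nat.le_of_lt_succ (b i).2⟩
  left_inv a := by ext i; simp
  right_inv b := by ext i; simp

instance auxBox_fin (K : Type*) [Field K] (d N : ℕ) :
    Module.Finite K (restrictDegree (Fin d) K N) := by
  have : Finite {a : Fin d →₀ ℕ | ∀ i, a i ≤ N} := Finite.of_equiv _ (auxBox d N).symm
  exact Module.Finite.of_basis (basisRestrictSupport K {a : Fin d →₀ ℕ | ∀ i, a i ≤ N})

lemma auxBox_finrank (K : Type*) [Field K] (d N : ℕ) :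
    Module.finrank K (restrictDegree (Fin d) K N) = (N + 1) ^ d := by
  have := Module.finrank_eq_nat_card_basis
    (basisRestrictSupport K {a : Fin d →₀ ℕ | ∀ i, a i ≤ N})
  refine this.trans ?_
  rw [Nat.card_congr (auxBox d N)]
  simp

lemma auxRD_mono (K : Type*) [CommRing K] {d a b : ℕ} (h : a ≤ b) :
    restrictDegree (Fin d) K a ≤ restrictDegree (Fin d) K b :=
  restrictSupport_mono _ fun _ hd i => le_trans (hd i) h

open scoped Pointwise in
lemma auxRD_mul (K : Type*) [CommRing K] {d a b : ℕ}
    {p q : MvPolynomial (Fin d) K} (hp : p ∈ restrictDegree (Fin d) K a)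
    (hq : q ∈ restrictDegree (Fin d) K b) :
    p * q ∈ restrictDegree (Fin d) K (a + b) := by
  have h := Submodule.mul_mem_mul hp hq
  unfold restrictDegree at h
  rw [← restrictSupport_add] at h
  refine restrictSupport_mono K ?_ h
  rintro _ ⟨x, hx, y, hy, rfl⟩ i
  have := hx i
  have := hy i
  simp only [Finsupp.add_apply]
  omega

lemma auxRD_exists (K : Type*) [CommRing K] {d : ℕ}
    (p : MvPolynomial (Fin d) K) : ∃ e, p ∈ restrictDegree (Fin d) K e := by
  refine ⟨p.totalDegree, restrictTotalDegree_le_restrictDegree _ _ _ ?_⟩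
  rw [mem_restrictTotalDegree]

/-- filtration -/
noncomputable abbrev auxF {n : ℕ} (δ : Fin n → ℕ) {K B : Type*} [CommRing K] [CommRing B] [Algebra K B]
    (π : MvPolynomial (Fin n) K →ₐ[K] B) (e : ℕ) : Submodule K B :=
  (auxS δ K e).map π.toLinearMap

lemma aux_lower {n : ℕ} (δ : Fin n → ℕ) (hδ : ∀ i, 0 < δ i) {K B : Type*} [Field K] [CommRing B]
    [Algebra K B] (π : MvPolynomial (Fin n) K →ₐ[K] B) (hπ : Function.Surjective π) {d : ℕ}
    (g : MvPolynomial (Fin d) K →ₐ[K] B) (hg : Function.Injective g) :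
    ∃ c, ∀ N, (N + 1) ^ d ≤ Module.finrank K (auxF δ π (c * N)) := by
  choose P hP using fun i => hπ (g (X i))
  choose e he using fun i => auxS_exists δ K (P i)
  refine ⟨∑ i, e i, fun N => ?_⟩
  have := auxS_finite δ hδ K ((∑ i, e i) * N)
  obtain ⟨G, hG⟩ : ∃ G : MvPolynomial (Fin d) K →ₐ[K] MvPolynomial (Fin n) K, G = aeval P :=
    ⟨_, rfl⟩
  have hcomp : ∀ x, π (G x) = g x := by
    intro x
    rw [← AlgHom.comp_apply]
    congr 1
    ext i; simp [hP, hG]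
  have hle : (restrictDegree (Fin d) K N).map g.toLinearMap ≤ auxF δ π ((∑ i, e i) * N) := by
    unfold restrictDegree
    rw [restrictSupport_eq_span, Submodule.map_span, Submodule.span_le]
    rintro _ ⟨_, ⟨a, ha, rfl⟩, rfl⟩
    refine ⟨G (monomial a 1), ?_, ?_⟩
    · rw [hG, aeval_monomial, map_one, one_mul, Finsupp.prod_fintype _ _ (by simp)]
      refine auxS_mono δ K ?_ (auxS_prod δ K Finset.univ _ (fun i => a i * e i)
        fun i => auxS_pow δ K (he i) (a i))
      rw [Finset.sum_mul]
      refine Finset.sum_le_sum fun i _ => ?_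
      rw [mul_comm]
      exact Nat.mul_le_mul_left _ (ha i)
    · exact hcomp _
  have h := Submodule.finrank_mono hle
  rw [← (Submodule.equivMapOfInjective g.toLinearMap hg _).finrank_eq, auxBox_finrank] at h
  exact h

lemma aux_upper {n : ℕ} (δ : Fin n → ℕ) (hδ : ∀ i, 0 < δ i) {K B : Type*} [Field K] [CommRing B]
    [Algebra K B] (π : MvPolynomial (Fin n) K →ₐ[K] B) {d : ℕ}
    (g : MvPolynomial (Fin d) K →ₐ[K] B) (hg : g.Finite) :
    ∃ s c, ∀ m, Module.finrank K (auxF δ π m) ≤ s * (c * (m + 1) + 1) ^ d := by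
  obtain ⟨s, r, hr⟩ : ∃ s, ∃ r : Fin s → B, ∀ b, ∃ q : Fin s → MvPolynomial (Fin d) K,
      ∑ k, g (q k) * r k = b := by
    algebraize [g.toRingHom]
    have : Module.Finite (MvPolynomial (Fin d) K) B := hg
    obtain ⟨s, r, hr⟩ := Module.Finite.exists_fin (R := MvPolynomial (Fin d) K) (M := B)
    refine ⟨s, r, fun b => ?_⟩
    have hb : b ∈ Submodule.span (MvPolynomial (Fin d) K) (Set.range r) := hr ▸ trivial
    obtain ⟨q, hq⟩ := (Submodule.mem_span_range_iff_exists_fun _).1 hb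
    exact ⟨q, by rw [← hq]; rfl⟩
  let Φ : (Fin s → MvPolynomial (Fin d) K) →ₗ[K] B :=
    ∑ k, (LinearMap.mulRight K (r k)) ∘ₗ g.toLinearMap ∘ₗ LinearMap.proj k
  have hΦ : ∀ q, Φ q = ∑ k, g (q k) * r k := fun q => by simp [Φ]
  let W : ℕ → Submodule K B := fun N =>
    LinearMap.range (Φ ∘ₗ LinearMap.pi
      (fun k => (restrictDegree (Fin d) K N).subtype ∘ₗ LinearMap.proj (R := K)
        (φ := fun _ : Fin s => restrictDegree (Fin d) K N) k))
  have hW : ∀ N b, b ∈ W N ↔ ∃ q : Fin s → MvPolynomial (Fin d) K,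
      (∀ k, q k ∈ restrictDegree (Fin d) K N) ∧ ∑ k, g (q k) * r k = b := by
    intro N b
    constructor
    · rintro ⟨q, rfl⟩
      exact ⟨fun k => q k, fun k => (q k).2, by simp [hΦ]⟩
    · rintro ⟨q, hq, rfl⟩
      exact ⟨fun k => ⟨q k, hq k⟩, by simp [hΦ]⟩
  have hWfin : ∀ N, Module.finrank K (W N) ≤ s * (N + 1) ^ d := by
    intro N
    refine (LinearMap.finrank_range_le _).trans ?_
    rw [Module.finrank_pi_fintype]
    simp [auxBox_finrank]
  have hWmono : ∀ {a b}, a ≤ b → W a ≤ W b := by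
    intro a b hab x hx
    obtain ⟨q, hq, rfl⟩ := (hW _ _).1 hx
    exact (hW _ _).2 ⟨q, fun k => auxRD_mono K hab (hq k), rfl⟩
  have hWex : ∀ b, ∃ e, b ∈ W e := by
    intro b
    obtain ⟨q, hq⟩ := hr b
    choose e he using fun k => auxRD_exists K (q k)
    refine ⟨∑ k, e k, (hW _ _).2 ⟨q, fun k => auxRD_mono K ?_ (he k), hq⟩⟩
    exact Finset.single_le_sum (f := e) (fun _ _ => Nat.zero_le _) (Finset.mem_univ k)
  have hWmul : ∀ {a e p x}, p ∈ restrictDegree (Fin d) K a → x ∈ W e → g p * x ∈ W (a + e) := by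
    intro a e p x hp hx
    obtain ⟨q, hq, rfl⟩ := (hW _ _).1 hx
    refine (hW _ _).2 ⟨fun k => p * q k, fun k => auxRD_mul K hp (hq k), ?_⟩
    rw [Finset.mul_sum]
    exact Finset.sum_congr rfl fun k _ => by rw [map_mul, mul_assoc]
  have hWb : ∀ b, ∃ c, ∀ N, ∀ x ∈ W N, b * x ∈ W (N + c) := by
    intro b
    choose e he using fun k => hWex (b * r k)
    refine ⟨∑ k, e k, fun N x hx => ?_⟩
    obtain ⟨q, hq, rfl⟩ := (hW _ _).1 hx
    rw [Finset.mul_sum]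
    refine Submodule.sum_mem _ fun k _ => ?_
    rw [show b * (g (q k) * r k) = g (q k) * (b * r k) by ring]
    refine hWmono ?_ (hWmul (hq k) (he k))
    exact Nat.add_le_add_left
      (Finset.single_le_sum (f := e) (fun _ _ => Nat.zero_le _) (Finset.mem_univ k)) _
  choose c hc using fun i => hWb (π (X i))
  obtain ⟨c₁, hc₁⟩ := hWex 1
  let C := c₁ + ∑ i, c i
  have hmon : ∀ a : Fin n →₀ ℕ, π (monomial a 1) ∈ W (C * (a.degree + 1)) := by
    intro a
    have hpow : ∀ i k N x, x ∈ W N → π (X i) ^ k * x ∈ W (N + k * c i) := by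
      intro i k N x hx
      induction k with
      | zero => simpa using hx
      | succ k ih =>
        have := hc i _ _ ih
        rw [pow_succ', mul_assoc, add_mul, one_mul, ← add_assoc]
        exact this
    have hprod : ∀ t : Finset (Fin n), ∏ i ∈ t, π (X i) ^ a i ∈ W (c₁ + ∑ i ∈ t, a i * c i) := by
      intro t
      induction t using Finset.induction_on with
      | empty => simpa using hc₁
      | insert i t hi ih =>
        rw [Finset.prod_insert hi, Finset.sum_insert hi, add_comm (a i * c i), ← add_assoc]
        exact hpow _ _ _ _ ih
    have h := hprod Finset.univ
    rw [monomial_eq, map_mul, Finsupp.prod_fintype _ _ (by simp), map_prod]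
    simp only [map_pow, map_one, one_mul]
    refine hWmono ?_ h
    have h1 : ∑ i, a i * c i ≤ a.degree * ∑ i, c i := by
      rw [Finsupp.degree_eq_sum, Finset.sum_mul]
      refine Finset.sum_le_sum fun i _ => Nat.mul_le_mul_left _ ?_
      exact Finset.single_le_sum (f := c) (fun _ _ => Nat.zero_le _) (Finset.mem_univ i)
    have h2 : 0 ≤ c₁ * a.degree := Nat.zero_le _
    have h3 : 0 ≤ ∑ i, c i := Nat.zero_le _
    simp only [C]
    nlinarith
  refine ⟨s, C, fun m => ?_⟩
  refine le_trans (Submodule.finrank_mono (?_ : auxF δ π m ≤ W (C * (m + 1)))) (hWfin _)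
  unfold auxF auxS
  rw [restrictSupport_eq_span, Submodule.map_span, Submodule.span_le]
  rintro _ ⟨_, ⟨a, ha, rfl⟩, rfl⟩
  refine hWmono (Nat.mul_le_mul_left _ (Nat.add_le_add_right ?_ 1)) (hmon a)
  refine le_trans ?_ ha
  rw [Finsupp.weight_apply, Finsupp.degree_eq_sum, Finsupp.sum_fintype _ _ (by simp)]
  exact Finset.sum_le_sum fun i _ => Nat.le_mul_of_pos_right _ (hδ i)

lemma aux_dim_le {n : ℕ} (δ : Fin n → ℕ) (hδ : ∀ i, 0 < δ i)
    {K B : Type*} [Field K] [CommRing B] [Algebra K B] [Nontrivial B]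
    (π : MvPolynomial (Fin n) K →ₐ[K] B) (hπ : Function.Surjective π)
    {K' B' : Type*} [Field K'] [CommRing B'] [Algebra K' B'] [Nontrivial B']
    (π' : MvPolynomial (Fin n) K' →ₐ[K'] B') (hπ' : Function.Surjective π')
    (h : ∀ e, Module.finrank K (auxF δ π e) = Module.finrank K' (auxF δ π' e)) :
    ringKrullDim B ≤ ringKrullDim B' := by
  have : Algebra.FiniteType K B := Algebra.FiniteType.of_surjective π hπ
  have : Algebra.FiniteType K' B' := Algebra.FiniteType.of_surjective π' hπ'
  obtain ⟨d, g, hg, hgf⟩ := exists_finite_inj_algHom_of_fg K B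
  obtain ⟨d', g', hg', hgf'⟩ := exists_finite_inj_algHom_of_fg K' B'
  rw [aux_dim_integral g.toRingHom hg hgf.to_isIntegral,
    aux_dim_integral g'.toRingHom hg' hgf'.to_isIntegral]
  simp only [MvPolynomial.ringKrullDim_of_isNoetherianRing, ringKrullDim_eq_zero_of_field,
    Nat.card_eq_fintype_card, Fintype.card_fin, zero_add]
  suffices hd : d ≤ d' by exact_mod_cast hd
  obtain ⟨c, hc⟩ := aux_lower δ hδ π hπ g hg
  obtain ⟨s, c', hc'⟩ := aux_upper δ hδ π' g' hgf'
  by_contra! hlt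
  let D := c' * (c + 1) + 1
  have key : ∀ N, (N + 1) ^ d ≤ s * (D * (N + 1)) ^ d' := by
    intro N
    refine (hc N).trans ((h _).trans_le ((hc' _).trans ?_))
    refine Nat.mul_le_mul_left _ (Nat.pow_le_pow_left ?_ _)
    have h1 : 0 ≤ c' * N := Nat.zero_le _
    have h2 : 0 ≤ c' * c := Nat.zero_le _
    simp only [D]
    nlinarith
  have key2 : ∀ N, N + 1 ≤ s * D ^ d' := by
    intro N
    have h1 := key N
    obtain ⟨k, rfl⟩ : ∃ k, d = d' + 1 + k := ⟨d - (d' + 1), by omega⟩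
    rw [mul_pow, ← mul_assoc, pow_add, pow_add, pow_one] at h1
    have h2 : 0 < (N + 1) ^ d' := by positivity
    have h3 : 1 ≤ (N + 1) ^ k := Nat.one_le_pow _ _ (by omega)
    have h4 : (N + 1) * (N + 1) ^ d' ≤ s * D ^ d' * (N + 1) ^ d' := by
      refine le_trans ?_ h1
      rw [mul_comm (N + 1)]
      exact Nat.le_mul_of_pos_right _ h3
    exact Nat.le_of_mul_le_mul_right h4 h2
  have := key2 (s * D ^ d')
  omega

lemma aux_subsingleton {n : ℕ} (δ : Fin n → ℕ) (hδ : ∀ i, 0 < δ i)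
    {K B : Type*} [Field K] [CommRing B] [Algebra K B]
    (π : MvPolynomial (Fin n) K →ₐ[K] B) :
    Module.finrank K (auxF δ π 0) = 0 ↔ Subsingleton B := by
  have := auxS_finite δ hδ K 0
  rw [Submodule.finrank_eq_zero]
  constructor
  · intro h
    have h1 : π 1 ∈ auxF δ π 0 := ⟨1, auxS_one δ K 0, rfl⟩
    rw [h, Submodule.mem_bot, map_one] at h1
    exact subsingleton_of_zero_eq_one h1.symm
  · intro h
    exact Subsingleton.elim _ _

lemma aux_dim_eq {n : ℕ} (δ : Fin n → ℕ) (hδ : ∀ i, 0 < δ i)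
    {K B : Type*} [Field K] [CommRing B] [Algebra K B]
    (π : MvPolynomial (Fin n) K →ₐ[K] B) (hπ : Function.Surjective π)
    {K' B' : Type*} [Field K'] [CommRing B'] [Algebra K' B']
    (π' : MvPolynomial (Fin n) K' →ₐ[K'] B') (hπ' : Function.Surjective π')
    (h : ∀ e, Module.finrank K (auxF δ π e) = Module.finrank K' (auxF δ π' e)) :
    ringKrullDim B = ringKrullDim B' := by
  rcases subsingleton_or_nontrivial B with hB | hB
  · have hB' := (aux_subsingleton δ hδ π').1 ((h 0).symm.trans ((aux_subsingleton δ hδ π).2 hB))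
    rw [ringKrullDim_eq_bot_of_subsingleton, ringKrullDim_eq_bot_of_subsingleton]
  · have hB' : Nontrivial B' := by
      by_contra hn
      rw [not_nontrivial_iff_subsingleton] at hn
      have := (aux_subsingleton δ hδ π).1 ((h 0).trans ((aux_subsingleton δ hδ π').2 hn))
      exact not_subsingleton B this
    exact le_antisymm (aux_dim_le δ hδ π hπ π' hπ' h)
      (aux_dim_le δ hδ π' hπ' π hπ fun e => (h e).symm)

/-- truncation to weight ≤ e -/
noncomputable def auxT {n : ℕ} (δ : Fin n → ℕ) (A : Type*) [CommRing A] (e : ℕ) :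
    MvPolynomial (Fin n) A →ₗ[A] MvPolynomial (Fin n) A :=
  ∑ i ∈ Finset.range (e + 1), weightedHomogeneousComponent δ i

lemma auxT_coeff {n : ℕ} (δ : Fin n → ℕ) (A : Type*) [CommRing A] (e : ℕ)
    (f : MvPolynomial (Fin n) A) (a : Fin n →₀ ℕ) :
    coeff a (auxT δ A e f) = if Finsupp.weight δ a ≤ e then coeff a f else 0 := by
  classical
  simp only [auxT, LinearMap.sum_apply, coeff_sum, coeff_weightedHomogeneousComponent,
    Finset.sum_ite_eq, Finset.mem_range, Nat.lt_succ_iff]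

lemma auxT_mem {n : ℕ} (δ : Fin n → ℕ) (A : Type*) [CommRing A] (e : ℕ)
    (f : MvPolynomial (Fin n) A) : auxT δ A e f ∈ auxS δ A e := by
  rw [mem_restrictSupport_iff]
  intro a ha
  by_contra hn
  have hn' : ¬ Finsupp.weight δ a ≤ e := hn
  have ha' : coeff a (auxT δ A e f) ≠ 0 := mem_support_iff.1 ha
  rw [auxT_coeff, if_neg hn'] at ha'
  exact ha' rfl

lemma auxT_of_mem {n : ℕ} (δ : Fin n → ℕ) (A : Type*) [CommRing A] (e : ℕ)
    (f : MvPolynomial (Fin n) A) (hf : f ∈ auxS δ A e) : auxT δ A e f = f := by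
  ext a
  rw [auxT_coeff]
  split_ifs with h
  · rfl
  · by_contra hn
    exact h ((mem_restrictSupport_iff A).1 hf (mem_support_iff.2 fun h' => hn h'.symm))

lemma aux_retract {n : ℕ} {A : Type*} [CommRing A] (δ : Fin n → ℕ)
    (I : Ideal (MvPolynomial (Fin n) A))
    (hI : ∀ f ∈ I, ∀ e : ℕ, weightedHomogeneousComponent δ e f ∈ I) (e : ℕ) :
    ∃ r : (MvPolynomial (Fin n) A ⧸ I) →ₗ[A] auxF δ (Ideal.Quotient.mkₐ A I) e,
      r ∘ₗ (auxF δ (Ideal.Quotient.mkₐ A I) e).subtype = LinearMap.id := by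
  let q : MvPolynomial (Fin n) A →ₗ[A] auxF δ (Ideal.Quotient.mkₐ A I) e :=
    LinearMap.codRestrict _ ((Ideal.Quotient.mkₐ A I).toLinearMap ∘ₗ auxT δ A e)
      fun f => ⟨_, auxT_mem δ A e f, rfl⟩
  let r := (Submodule.liftQ (I.restrictScalars A) q (by
    intro f hf
    rw [LinearMap.mem_ker]
    ext
    change Ideal.Quotient.mk I (auxT δ A e f) = 0
    rw [Ideal.Quotient.eq_zero_iff_mem]
    simp only [auxT, LinearMap.sum_apply]
    exact Ideal.sum_mem _ fun i _ => hI f hf i)) ∘ₗ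
      (Submodule.Quotient.restrictScalarsEquiv A I).symm.toLinearMap
  refine ⟨r, ?_⟩
  ext ⟨_, f, hf, rfl⟩
  change Ideal.Quotient.mk I (auxT δ A e f) = Ideal.Quotient.mk I f
  rw [auxT_of_mem δ A e f hf]

/-- The structure map of the fibre. -/
noncomputable def auxPi {n : ℕ} {A : Type*} [CommRing A]
    (I : Ideal (MvPolynomial (Fin n) A)) (K : Type*) [CommRing K] [Algebra A K] :
    MvPolynomial (Fin n) K →ₐ[K] K ⊗[A] (MvPolynomial (Fin n) A ⧸ I) :=
  aeval fun i => (1 : K) ⊗ₜ[A] Ideal.Quotient.mk I (X i)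

lemma auxPi_F {n : ℕ} {A : Type*} [CommRing A] (δ : Fin n → ℕ)
    (I : Ideal (MvPolynomial (Fin n) A)) (K : Type*) [CommRing K] [Algebra A K] (e : ℕ) :
    auxF δ (auxPi I K) e = (auxF δ (Ideal.Quotient.mkₐ A I) e).baseChange K := by
  unfold auxF auxS
  rw [restrictSupport_eq_span, restrictSupport_eq_span, Submodule.map_span, Submodule.map_span,
    Submodule.baseChange_span, Set.image_image, Set.image_image, Set.image_image]
  congr 1
  refine Set.image_congr fun a _ => ?_
  have h : ∀ x : MvPolynomial (Fin n) A ⧸ I, (1 : K) ⊗ₜ[A] x =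
      (Algebra.TensorProduct.includeRight : _ →ₐ[A] K ⊗[A] (MvPolynomial (Fin n) A ⧸ I)) x :=
    fun _ => rfl
  simp only [auxPi, AlgHom.toLinearMap_apply, TensorProduct.mk_apply, aeval_monomial, map_one,
    one_mul, Ideal.Quotient.mkₐ_eq_mk, h]
  rw [monomial_eq, map_mul, map_mul, Finsupp.prod, Finsupp.prod, map_prod, map_prod]
  simp
  rfl

lemma auxPi_surjective {n : ℕ} {A : Type*} [CommRing A] (I : Ideal (MvPolynomial (Fin n) A))
    (K : Type*) [CommRing K] [Algebra A K] : Function.Surjective (auxPi I K) := by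
  intro x
  induction x using TensorProduct.induction_on with
  | zero => exact ⟨0, map_zero _⟩
  | add x y hx hy =>
    obtain ⟨a, rfl⟩ := hx
    obtain ⟨b, rfl⟩ := hy
    exact ⟨a + b, map_add _ _ _⟩
  | tmul k x =>
    obtain ⟨f, rfl⟩ := Ideal.Quotient.mk_surjective x
    obtain ⟨e, he⟩ := auxS_exists (fun _ => 1) A f
    have : k ⊗ₜ[A] Ideal.Quotient.mk I f ∈ auxF (fun _ => 1) (auxPi I K) e := by
      rw [auxPi_F]
      exact Submodule.tmul_mem_baseChange_of_mem _ ⟨f, he, rfl⟩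
    obtain ⟨y, -, hy⟩ := this
    exact ⟨y, hy⟩

lemma aux_finrank {n : ℕ} {A : Type*} [CommRing A] [IsNoetherianRing A]
    (δ : Fin n → ℕ) (hδ : ∀ i, 0 < δ i)
    (I : Ideal (MvPolynomial (Fin n) A))
    (hI : ∀ f ∈ I, ∀ e : ℕ, weightedHomogeneousComponent δ e f ∈ I)
    (hflat : Module.Flat A (MvPolynomial (Fin n) A ⧸ I)) (e : ℕ) (p : PrimeSpectrum A) :
    Module.finrank (residueFieldAt p) (auxF (K := residueFieldAt p)
      (B := residueFieldAt p ⊗[A] (MvPolynomial (Fin n) A ⧸ I)) δ (auxPi I (residueFieldAt p)) e) =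
      Module.rankAtStalk (auxF δ (Ideal.Quotient.mkₐ A I) e) p := by
  obtain ⟨r, hr⟩ := aux_retract δ I hI e
  have := auxS_finite δ hδ A e
  have : Module.Flat A (auxF δ (Ideal.Quotient.mkₐ A I) e) := Module.Flat.of_retract _ r hr
  rw [Module.rankAtStalk_eq, auxPi_F]
  have hinj : Function.Injective
      ((auxF δ (Ideal.Quotient.mkₐ A I) e).subtype.baseChange (residueFieldAt p)) := by
    apply Function.LeftInverse.injective (g := r.baseChange (residueFieldAt p))
    intro x
    rw [← LinearMap.comp_apply, ← LinearMap.baseChange_comp, hr]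
    simp
  exact (LinearEquiv.ofInjective _ hinj).finrank_eq.symm

end helpers

/-- Let `A` be a commutative Noetherian ring with connected spectrum, `S = A[x₁,…,x_n]` graded
with `deg xᵢ = δᵢ > 0`, `I ⊆ S` a homogeneous ideal, and `R = S ⧸ I`. If `R` is flat as an
`A`-module, then all fibers `R ⊗_A κ(p)`, for `p ∈ Spec A`, have the same Krull dimension. -/
theorem fibers_same_dimension
    {n : ℕ} {A : Type*} [CommRing A] [IsNoetherianRing A]
    [ConnectedSpace (PrimeSpectrum A)]
    (δ : Fin n → ℕ) (hδ : ∀ i, 0 < δ i)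
    (I : Ideal (MvPolynomial (Fin n) A))
    (hI : ∀ f ∈ I, ∀ e : ℕ, MvPolynomial.weightedHomogeneousComponent δ e f ∈ I)
    (hflat : Module.Flat A (MvPolynomial (Fin n) A ⧸ I)) :
    ∀ p q : PrimeSpectrum A,
      ringKrullDim ((MvPolynomial (Fin n) A ⧸ I) ⊗[A] residueFieldAt p) =
        ringKrullDim ((MvPolynomial (Fin n) A ⧸ I) ⊗[A] residueFieldAt q) := by
  intro p q
  rw [ringKrullDim_eq_of_ringEquiv (R := (MvPolynomial (Fin n) A ⧸ I) ⊗[A] residueFieldAt p)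
      (S := residueFieldAt p ⊗[A] (MvPolynomial (Fin n) A ⧸ I))
      (Algebra.TensorProduct.comm A (MvPolynomial (Fin n) A ⧸ I) (residueFieldAt p)).toRingEquiv,
    ringKrullDim_eq_of_ringEquiv (R := (MvPolynomial (Fin n) A ⧸ I) ⊗[A] residueFieldAt q)
      (S := residueFieldAt q ⊗[A] (MvPolynomial (Fin n) A ⧸ I))
      (Algebra.TensorProduct.comm A (MvPolynomial (Fin n) A ⧸ I) (residueFieldAt q)).toRingEquiv]
  refine aux_dim_eq (K := residueFieldAt p) (K' := residueFieldAt q)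
    (B := residueFieldAt p ⊗[A] (MvPolynomial (Fin n) A ⧸ I))
    (B' := residueFieldAt q ⊗[A] (MvPolynomial (Fin n) A ⧸ I)) δ hδ (auxPi I (residueFieldAt p)) (auxPi_surjective I _)
    (auxPi I (residueFieldAt q)) (auxPi_surjective I _) fun e => ?_
  rw [aux_finrank δ hδ I hI hflat, aux_finrank δ hδ I hI hflat]
  obtain ⟨r, hr⟩ := aux_retract δ I hI e
  have := auxS_finite δ hδ A e
  have : Module.Flat A (auxF δ (Ideal.Quotient.mkₐ A I) e) := Module.Flat.of_retract _ r hr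
  have : Module.FinitePresentation A (auxF δ (Ideal.Quotient.mkₐ A I) e) :=
    Module.finitePresentation_of_finite _ _
  exact Module.isLocallyConstant_rankAtStalk.apply_eq_of_preconnectedSpace p q
end
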